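/- (Sandwich Lemma) For every λ > 0 there exists K < ∞ such that the following holds: let n ≥ 1, 0 ≤ i ≤ n, let φ₀, …, φ_{n−1}, γ ∈ D³([0,1]) satisfy ‖γ‖₁ + Σ_j ‖φ_j‖₁ ≤ λ, and set φ = φ_{n−1} ∘ ⋯ ∘ φ₀ and ψ = φ_{n−1} ∘ ⋯ ∘ φ_i ∘ γ ∘ φ_{i−1} ∘ ⋯ ∘ φ₀ (with the convention that an empty composition is the identity). Then sup_{x∈[0,1]} |Nψ(x) − Nφ(x)| ≤ K · sup_{x∈[0,1]} |Nγ(x)|. -/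

import Mathlib

open Set Filter Topology

noncomputable section

/-- Derivative within `[0,1]`. -/
def derivI (φ : ℝ → ℝ) : ℝ → ℝ := derivWithin φ (Icc 0 1)

/-- The nonlinearity `Nφ = (log φ')' = φ''/φ'` (with derivatives taken within `[0,1]`). -/
def nonlin (φ : ℝ → ℝ) : ℝ → ℝ := fun x => derivI (derivI φ) x / derivI φ x

/-- The `C⁰`-nonlinearity norm `‖φ‖ = sup_{x ∈ [0,1]} |Nφ(x)|`. -/
def nlNorm (φ : ℝ → ℝ) : ℝ := ⨆ x : Icc (0 : ℝ) 1, |nonlin φ x.1|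

/-- The `C¹`-nonlinearity norm `‖φ‖₁ = max (sup |Nφ|, sup |(Nφ)'|)`. -/
def nlNorm1 (φ : ℝ → ℝ) : ℝ :=
  max (nlNorm φ) (⨆ x : Icc (0 : ℝ) 1, |derivI (nonlin φ) x.1|)

/-- `φ ∈ D^k([0,1])`: an orientation-preserving `C^k` diffeomorphism of `[0,1]`
onto itself. -/
def IsDk (k : ℕ) (φ : ℝ → ℝ) : Prop :=
  ContDiffOn ℝ k φ (Icc 0 1) ∧ φ 0 = 0 ∧ φ 1 = 1 ∧ StrictMonoOn φ (Icc 0 1) ∧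
    MapsTo φ (Icc 0 1) (Icc 0 1) ∧ ∀ x ∈ Icc (0 : ℝ) 1, 0 < derivI φ x

/-- `compFrom φs j m = φ_{j+m-1} ∘ ⋯ ∘ φ_{j+1} ∘ φ_j` (and the identity for `m = 0`). -/
def compFrom (φs : ℕ → ℝ → ℝ) (j : ℕ) : ℕ → ℝ → ℝ
  | 0 => id
  | (m + 1) => φs (j + m) ∘ compFrom φs j m

lemma uI : UniqueDiffOn ℝ (Icc (0:ℝ) 1) := uniqueDiffOn_Icc one_pos

lemma IsDk.contD {φ : ℝ → ℝ} (h : IsDk 3 φ) : ContDiffOn ℝ 2 (derivI φ) (Icc 0 1) :=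
  ContDiffOn.derivWithin h.1 uI (by norm_num)

lemma IsDk.contDD {φ : ℝ → ℝ} (h : IsDk 3 φ) : ContDiffOn ℝ 1 (derivI (derivI φ)) (Icc 0 1) :=
  ContDiffOn.derivWithin h.contD uI (by norm_num)

lemma IsDk.contN {φ : ℝ → ℝ} (h : IsDk 3 φ) : ContDiffOn ℝ 1 (nonlin φ) (Icc 0 1) :=
  ContDiffOn.div h.contDD (h.contD.of_le (by norm_num)) (fun x hx => (h.2.2.2.2.2 x hx).ne')

lemma hasD_of {f : ℝ → ℝ} {n : WithTop ℕ∞} (h : ContDiffOn ℝ n f (Icc 0 1)) (hn : n ≠ 0)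
    {x : ℝ} (hx : x ∈ Icc (0:ℝ) 1) : HasDerivWithinAt f (derivI f x) (Icc 0 1) x :=
  (h.differentiableOn hn x hx).hasDerivWithinAt

lemma IsDk.hasD {φ : ℝ → ℝ} (h : IsDk 3 φ) {x : ℝ} (hx : x ∈ Icc (0:ℝ) 1) :
    HasDerivWithinAt φ (derivI φ x) (Icc 0 1) x := hasD_of h.1 (by norm_num) hx

lemma IsDk.hasDD {φ : ℝ → ℝ} (h : IsDk 3 φ) {x : ℝ} (hx : x ∈ Icc (0:ℝ) 1) :
    HasDerivWithinAt (derivI φ) (derivI (derivI φ) x) (Icc 0 1) x :=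
  hasD_of h.contD (by norm_num) hx

lemma IsDk.hasN {φ : ℝ → ℝ} (h : IsDk 3 φ) {x : ℝ} (hx : x ∈ Icc (0:ℝ) 1) :
    HasDerivWithinAt (nonlin φ) (derivI (nonlin φ) x) (Icc 0 1) x :=
  hasD_of h.contN (by norm_num) hx

lemma le_sup_of {f : ℝ → ℝ} (h : ContinuousOn f (Icc 0 1)) {x : ℝ} (hx : x ∈ Icc (0:ℝ) 1) :
    |f x| ≤ ⨆ x : Icc (0 : ℝ) 1, |f x.1| := by
  obtain ⟨C, hC⟩ := isCompact_Icc.exists_bound_of_continuousOn h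
  refine le_ciSup (f := fun x : Icc (0:ℝ) 1 => |f x.1|) ⟨C, ?_⟩ ⟨x, hx⟩
  rintro _ ⟨y, rfl⟩
  exact hC y.1 y.2

lemma IsDk.abs_nonlin {φ : ℝ → ℝ} (h : IsDk 3 φ) {x : ℝ} (hx : x ∈ Icc (0:ℝ) 1) :
    |nonlin φ x| ≤ nlNorm φ := le_sup_of h.contN.continuousOn hx

lemma nlNorm_le (φ : ℝ → ℝ) : nlNorm φ ≤ nlNorm1 φ := le_max_left _ _

lemma nlNorm_nonneg (φ : ℝ → ℝ) : 0 ≤ nlNorm φ := Real.iSup_nonneg fun _ => abs_nonneg _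

lemma IsDk.abs_dnonlin {φ : ℝ → ℝ} (h : IsDk 3 φ) {x : ℝ} (hx : x ∈ Icc (0:ℝ) 1) :
    |derivI (nonlin φ) x| ≤ nlNorm1 φ :=
  (le_sup_of (ContDiffOn.continuousOn (n := 0)
    (ContDiffOn.derivWithin h.contN uI (by norm_num))) hx).trans (le_max_right _ _)

lemma lip_of {f f' : ℝ → ℝ} {C : ℝ}
    (h : ∀ x ∈ Icc (0:ℝ) 1, HasDerivWithinAt f (f' x) (Icc 0 1) x)
    (hC : ∀ x ∈ Icc (0:ℝ) 1, |f' x| ≤ C) {x y : ℝ} (hx : x ∈ Icc (0:ℝ) 1)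
    (hy : y ∈ Icc (0:ℝ) 1) : |f x - f y| ≤ C * |x - y| :=
  Convex.norm_image_sub_le_of_norm_hasDerivWithin_le h hC (convex_Icc 0 1) hy hx

lemma IsDk.abs_log {φ : ℝ → ℝ} (h : IsDk 3 φ) {x : ℝ} (hx : x ∈ Icc (0:ℝ) 1) :
    |Real.log (derivI φ x)| ≤ nlNorm φ := by
  obtain ⟨c, hc, hc1⟩ := exists_hasDerivAt_eq_slope φ (derivI φ) one_pos h.1.continuousOn
    (fun x hx => (h.hasD (Ioo_subset_Icc_self hx)).hasDerivAt (Icc_mem_nhds hx.1 hx.2))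
  rw [h.2.1, h.2.2.1] at hc1
  have hc1 : derivI φ c = 1 := by rw [hc1]; norm_num
  have hcI := Ioo_subset_Icc_self hc
  have := lip_of (f := fun x => Real.log (derivI φ x)) (f' := nonlin φ)
    (fun x hx => (h.hasDD hx).log (h.2.2.2.2.2 x hx).ne') (fun x hx => h.abs_nonlin hx) hx hcI
  simp only [hc1, Real.log_one, sub_zero] at this
  have h1 : |x - c| ≤ 1 := by
    rw [abs_le]; constructor <;> linarith [hx.1, hx.2, hcI.1, hcI.2]
  nlinarith [nlNorm_nonneg φ]

lemma IsDk.deriv_le {φ : ℝ → ℝ} (h : IsDk 3 φ) {x : ℝ} (hx : x ∈ Icc (0:ℝ) 1) :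
    derivI φ x ≤ Real.exp (nlNorm φ) := by
  have := (abs_le.1 (h.abs_log hx)).2
  rwa [Real.log_le_iff_le_exp (h.2.2.2.2.2 x hx)] at this

lemma IsDk.deriv_sub_one {φ : ℝ → ℝ} (h : IsDk 3 φ) {x : ℝ} (hx : x ∈ Icc (0:ℝ) 1) :
    |derivI φ x - 1| ≤ nlNorm φ * Real.exp (nlNorm φ) := by
  have h1 := abs_le.1 (h.abs_log hx)
  have h2 := h.deriv_le hx
  have h0 := h.2.2.2.2.2 x hx
  set t := Real.log (derivI φ x) with ht
  have he : derivI φ x = Real.exp t := (Real.exp_log h0).symm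
  have hM := nlNorm_nonneg φ
  have hE : 1 ≤ Real.exp (nlNorm φ) := Real.one_le_exp hM
  have h3 := Real.add_one_le_exp t
  have h4 := Real.add_one_le_exp (-t)
  have h5 : Real.exp (-t) * Real.exp t = 1 := by rw [← Real.exp_add]; simp
  have h6 : Real.exp t - 1 ≤ t * Real.exp t := by nlinarith [Real.exp_pos t]
  rw [he] at h2 ⊢
  rw [abs_le]
  constructor
  · nlinarith
  · nlinarith [Real.exp_pos t]

lemma derivI_comp {f g : ℝ → ℝ} (hf : IsDk 3 f) (hg : IsDk 3 g) {x : ℝ}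
    (hx : x ∈ Icc (0:ℝ) 1) : derivI (f ∘ g) x = derivI f (g x) * derivI g x :=
  ((hf.hasD (hg.2.2.2.2.1 hx)).comp x (hg.hasD hx) hg.2.2.2.2.1).derivWithin (uI x hx)

lemma IsDk.comp' {f g : ℝ → ℝ} (hf : IsDk 3 f) (hg : IsDk 3 g) : IsDk 3 (f ∘ g) := by
  refine ⟨hf.1.comp hg.1 hg.2.2.2.2.1, ?_, ?_, ?_, hf.2.2.2.2.1.comp hg.2.2.2.2.1, ?_⟩
  · simp [hg.2.1, hf.2.1]
  · simp [hg.2.2.1, hf.2.2.1]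
  · exact hf.2.2.2.1.comp hg.2.2.2.1 hg.2.2.2.2.1
  · intro x hx
    rw [derivI_comp hf hg hx]
    exact mul_pos (hf.2.2.2.2.2 _ (hg.2.2.2.2.1 hx)) (hg.2.2.2.2.2 x hx)

lemma nonlin_comp {f g : ℝ → ℝ} (hf : IsDk 3 f) (hg : IsDk 3 g) {x : ℝ}
    (hx : x ∈ Icc (0:ℝ) 1) :
    nonlin (f ∘ g) x = nonlin f (g x) * derivI g x + nonlin g x := by
  have h1 : derivI (derivI (f ∘ g)) x =
      (derivI (derivI f) (g x) * derivI g x) * derivI g x +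
        derivI f (g x) * derivI (derivI g) x := by
    have e : derivI (derivI (f ∘ g)) x =
        derivI (fun x => derivI f (g x) * derivI g x) x :=
      derivWithin_congr (fun y hy => derivI_comp hf hg hy) (derivI_comp hf hg hx)
    rw [e]
    exact (((hf.hasDD (hg.2.2.2.2.1 hx)).comp x (hg.hasD hx) hg.2.2.2.2.1).mul
      (hg.hasDD hx)).derivWithin (uI x hx)
  have a := (hf.2.2.2.2.2 _ (hg.2.2.2.2.1 hx)).ne'
  have b := (hg.2.2.2.2.2 x hx).ne'
  unfold nonlin
  rw [h1, derivI_comp hf hg hx]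
  field_simp

lemma derivI_id {x : ℝ} (hx : x ∈ Icc (0:ℝ) 1) : derivI id x = 1 :=
  derivWithin_id x _ (uI x hx)

lemma isDk_id : IsDk 3 id := by
  refine ⟨contDiffOn_id, rfl, rfl, strictMonoOn_id, fun _ h => h, fun x hx => ?_⟩
  rw [derivI_id hx]; exact one_pos

lemma nonlin_id {x : ℝ} (hx : x ∈ Icc (0:ℝ) 1) : nonlin id x = 0 := by
  have e : derivI (derivI id) x = derivI (fun _ => (1:ℝ)) x :=
    derivWithin_congr (fun y hy => derivI_id hy) (derivI_id hx)
  have e2 : derivI (fun _ => (1:ℝ)) x = 0 := by simp [derivI]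
  simp [nonlin, e, e2]

def LC (lam : ℝ) : ℝ := Real.exp lam ^ 2 * (1 + lam)

structure Bd (lam : ℝ) (B : ℝ → ℝ) (s : ℝ) : Prop where
  dk : IsDk 3 B
  d : ∀ x ∈ Icc (0:ℝ) 1, derivI B x ≤ Real.exp s
  n : ∀ x ∈ Icc (0:ℝ) 1, |nonlin B x| ≤ Real.exp lam * s
  l : ∀ x ∈ Icc (0:ℝ) 1, ∀ y ∈ Icc (0:ℝ) 1,
    |nonlin B x - nonlin B y| ≤ LC lam * s * |x - y|

lemma bd_id (lam : ℝ) : Bd lam id 0 := by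
  refine ⟨isDk_id, fun x hx => ?_, fun x hx => ?_, fun x hx y hy => ?_⟩
  · simp [derivI_id hx]
  · simp [nonlin_id hx]
  · simp [nonlin_id hx, nonlin_id hy]

lemma bd_step {lam s : ℝ} {B f : ℝ → ℝ} (hB : Bd lam B s) (hf : IsDk 3 f) (hs : 0 ≤ s)
    (h : s + nlNorm1 f ≤ lam) : Bd lam (f ∘ B) (s + nlNorm1 f) := by
  set M := nlNorm1 f with hM
  have hM0 : 0 ≤ M := (nlNorm_nonneg f).trans (nlNorm_le f)
  set E := Real.exp lam with hE
  have hsl : s ≤ lam := by linarith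
  have hEs : Real.exp s ≤ E := Real.exp_le_exp.2 hsl
  have hE0 : 0 < E := Real.exp_pos _
  have hm := hB.dk.2.2.2.2.1
  have hp := hB.dk.2.2.2.2.2
  have hd : ∀ x ∈ Icc (0:ℝ) 1, |derivI B x| ≤ E := fun x hx => by
    rw [abs_of_pos (hp x hx)]; exact (hB.d x hx).trans hEs
  have hfn : ∀ x ∈ Icc (0:ℝ) 1, |nonlin f (B x)| ≤ M := fun x hx =>
    (hf.abs_nonlin (hm hx)).trans (nlNorm_le f)
  refine ⟨hf.comp' hB.dk, fun x hx => ?_, fun x hx => ?_, fun x hx y hy => ?_⟩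
  · rw [derivI_comp hf hB.dk hx, Real.exp_add, mul_comm]
    have h1 := (hf.deriv_le (hm hx)).trans (Real.exp_le_exp.2 (nlNorm_le f))
    exact mul_le_mul (hB.d x hx) h1 (hf.2.2.2.2.2 _ (hm hx)).le (Real.exp_pos _).le
  · rw [nonlin_comp hf hB.dk hx]
    have h1 := mul_le_mul (hfn x hx) (hd x hx) (abs_nonneg _) hM0
    rw [← abs_mul] at h1
    have h2 := hB.n x hx
    have h3 := abs_add_le (nonlin f (B x) * derivI B x) (nonlin B x)
    linarith
  · rw [nonlin_comp hf hB.dk hx, nonlin_comp hf hB.dk hy]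
    have hBl : |B x - B y| ≤ E * |x - y| := lip_of (fun x hx => hB.dk.hasD hx) hd hx hy
    have hdl : |derivI B x - derivI B y| ≤ (E ^ 2 * lam) * |x - y| := by
      refine lip_of (fun x hx => hB.dk.hasDD hx) (fun z hz => ?_) hx hy
      have e : derivI (derivI B) z = nonlin B z * derivI B z := by
        unfold nonlin; field_simp [(hp z hz).ne']
      rw [e, abs_mul]
      have h1 : |nonlin B z| ≤ E * lam := (hB.n z hz).trans (by gcongr)
      have := mul_le_mul h1 (hd z hz) (abs_nonneg _) (by nlinarith)
      nlinarith
    have hNl : |nonlin f (B x) - nonlin f (B y)| ≤ M * |B x - B y| :=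
      lip_of (fun x hx => hf.hasN hx) (fun x hx => hf.abs_dnonlin hx) (hm hx) (hm hy)
    have t1 : |(nonlin f (B x) - nonlin f (B y)) * derivI B x| ≤ M * (E * |x - y|) * E := by
      rw [abs_mul]
      exact mul_le_mul (hNl.trans (by gcongr)) (hd x hx) (abs_nonneg _) (by positivity)
    have t2 : |nonlin f (B y) * (derivI B x - derivI B y)| ≤ M * ((E ^ 2 * lam) * |x - y|) := by
      rw [abs_mul]
      exact mul_le_mul (hfn y hy) hdl (abs_nonneg _) hM0
    have t3 := hB.l x hx y hy
    have e : nonlin f (B x) * derivI B x + nonlin B x - (nonlin f (B y) * derivI B y + nonlin B y)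
      = (nonlin f (B x) - nonlin f (B y)) * derivI B x
        + nonlin f (B y) * (derivI B x - derivI B y) + (nonlin B x - nonlin B y) := by ring
    rw [e]
    refine (abs_add_three _ _ _).trans ((add_le_add_three t1 t2 t3).trans (le_of_eq ?_))
    simp only [LC, ← hE]; ring

lemma nlNorm1_nonneg (f : ℝ → ℝ) : 0 ≤ nlNorm1 f := (nlNorm_nonneg f).trans (nlNorm_le f)

lemma bd_comp {lam : ℝ} (φs : ℕ → ℝ → ℝ) (k m : ℕ) (h : ∀ j < m, IsDk 3 (φs (k + j)))
    (hs : ∑ j ∈ Finset.range m, nlNorm1 (φs (k + j)) ≤ lam) :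
    Bd lam (compFrom φs k m) (∑ j ∈ Finset.range m, nlNorm1 (φs (k + j))) := by
  induction m with
  | zero => simpa [compFrom] using bd_id lam
  | succ m ih =>
    rw [Finset.sum_range_succ] at hs ⊢
    have := nlNorm1_nonneg (φs (k + m))
    exact bd_step (ih (fun j hj => h j (by omega)) (by linarith)) (h m (by omega))
      (Finset.sum_nonneg fun _ _ => nlNorm1_nonneg _) hs

lemma compFrom_add (φs : ℕ → ℝ → ℝ) (i m : ℕ) :
    compFrom φs 0 (i + m) = compFrom φs i m ∘ compFrom φs 0 i := by
  induction m with
  | zero => rfl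
  | succ m ih =>
    rw [← add_assoc, compFrom, ih, compFrom, zero_add]; rfl

/-- Sandwich Lemma: for every `λ > 0` there is `K` such that
sandwiching a diffeomorphism `γ` anywhere inside a composition
`φ = φ_{n-1} ∘ ⋯ ∘ φ₀` with total `C¹`-nonlinearity at most `λ` changes the
nonlinearity of the composition by at most `K ‖γ‖` in the sup norm. -/
theorem sandwich_lemma :
    ∀ lam : ℝ, 0 < lam → ∃ K : ℝ, ∀ n : ℕ, 1 ≤ n → ∀ i : ℕ, i ≤ n →
      ∀ φs : ℕ → ℝ → ℝ, ∀ γ : ℝ → ℝ,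
        (∀ j < n, IsDk 3 (φs j)) → IsDk 3 γ →
        nlNorm1 γ + ∑ j ∈ Finset.range n, nlNorm1 (φs j) ≤ lam →
        (⨆ x : Icc (0 : ℝ) 1,
          |nonlin (compFrom φs i (n - i) ∘ γ ∘ compFrom φs 0 i) x.1 -
            nonlin (compFrom φs 0 n) x.1|) ≤ K * nlNorm γ := by
  intro lam hlam
  set E := Real.exp lam with hE
  refine ⟨E * (LC lam * lam * E ^ 2 + lam * E ^ 2 + 1), ?_⟩
  intro n _ i hi φs γ hφ hγ hsum
  obtain ⟨m, rfl⟩ := Nat.exists_eq_add_of_le hi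
  rw [Nat.add_sub_cancel_left, compFrom_add]
  rw [Finset.sum_range_add] at hsum
  have hγ0 := nlNorm1_nonneg γ
  have s1 : 0 ≤ ∑ j ∈ Finset.range i, nlNorm1 (φs j) :=
    Finset.sum_nonneg fun _ _ => nlNorm1_nonneg _
  have s2 : 0 ≤ ∑ j ∈ Finset.range m, nlNorm1 (φs (i + j)) :=
    Finset.sum_nonneg fun _ _ => nlNorm1_nonneg _
  have hA := bd_comp (lam := lam) φs 0 i (fun j hj => by rw [zero_add]; exact hφ j (by omega))
    (by simp only [zero_add]; linarith)
  have hB := bd_comp (lam := lam) φs i m (fun j hj => hφ _ (by omega)) (by linarith)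
  simp only [zero_add] at hA
  set A := compFrom φs 0 i
  set B := compFrom φs i m
  set M := nlNorm γ with hM
  have hM0 : 0 ≤ M := nlNorm_nonneg γ
  have hMl : M ≤ lam := (nlNorm_le γ).trans (by linarith)
  have hE0 : 0 < E := Real.exp_pos _
  have hL0 : 0 ≤ LC lam := by unfold LC; positivity
  have hEM : Real.exp M ≤ E := Real.exp_le_exp.2 hMl
  have hg1 : ∀ y ∈ Icc (0:ℝ) 1, |derivI γ y - 1| ≤ M * E := fun y hy =>
    (hγ.deriv_sub_one hy).trans (by gcongr)
  refine ciSup_le fun ⟨x, hx⟩ => ?_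
  have hy : A x ∈ Icc (0:ℝ) 1 := hA.dk.2.2.2.2.1 hx
  rw [nonlin_comp hB.dk (hγ.comp' hA.dk) hx, nonlin_comp hγ hA.dk hx, derivI_comp hγ hA.dk hx,
    nonlin_comp hB.dk hA.dk hx, Function.comp_apply]
  have hAp := hA.dk.2.2.2.2.2 x hx
  have hAd : derivI A x ≤ E := (hA.d x hx).trans (Real.exp_le_exp.2 (by linarith))
  set y := A x
  have hgy : γ y ∈ Icc (0:ℝ) 1 := hγ.2.2.2.2.1 hy
  have hd : |γ y - y| ≤ M * E := by
    have := lip_of (f := fun z => γ z - z) (f' := fun z => derivI γ z - 1)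
      (fun z hz => (hγ.hasD hz).sub (hasDerivWithinAt_id z _)) hg1 hy
      (y := 0) ⟨le_rfl, zero_le_one⟩
    simp only [hγ.2.1, sub_zero, abs_of_nonneg hy.1] at this
    exact this.trans (mul_le_of_le_one_right (by positivity) hy.2)
  have hgd : |derivI γ y| ≤ E := by
    rw [abs_of_pos (hγ.2.2.2.2.2 y hy)]; exact (hγ.deriv_le hy).trans hEM
  have t1 : |(nonlin B (γ y) - nonlin B y) * derivI γ y| ≤ LC lam * lam * (M * E) * E := by
    rw [abs_mul]
    refine mul_le_mul ((hB.l _ hgy _ hy).trans ?_) hgd (abs_nonneg _) (by positivity)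
    gcongr
    linarith
  have t2 : |nonlin B y * (derivI γ y - 1)| ≤ (E * lam) * (M * E) := by
    rw [abs_mul]
    refine mul_le_mul ((hB.n _ hy).trans ?_) (hg1 y hy) (abs_nonneg _) (by positivity)
    gcongr
    linarith
  have t3 : |nonlin γ y| ≤ M := hγ.abs_nonlin hy
  have e : nonlin B (γ y) * (derivI γ y * derivI A x) + (nonlin γ y * derivI A x + nonlin A x)
      - (nonlin B y * derivI A x + nonlin A x) =
      derivI A x * ((nonlin B (γ y) - nonlin B y) * derivI γ y
        + nonlin B y * (derivI γ y - 1) + nonlin γ y) := by ring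
  rw [e, abs_mul, abs_of_pos hAp]
  calc _ ≤ E * (LC lam * lam * (M * E) * E + (E * lam) * (M * E) + M) :=
        mul_le_mul hAd ((abs_add_three _ _ _).trans (add_le_add_three t1 t2 t3))
          (abs_nonneg _) hE0.le
    _ = _ := by ring

end
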